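/- Let 𝒟 = (D_0,…,D_m) be a D-flag of length m with gaps g_1 < … < g_m, and let 𝓜_top be a standard module with D_{𝓜_top} = D_m such that, writing 𝓜̄ = 𝓜_top/𝔪𝓜_top and 𝓜̄^{(j)} for the image of 𝓜_top ∩ z^j𝒪 in 𝓜̄, one has dim_ℂ(𝓜̄^{(g_i)}/𝓜̄^{(g_i+1)}) = 1 for every 1 ≤ i ≤ m. Then there exists a flag of standard modules 𝓜_0 ⊆ 𝓜_1 ⊆ … ⊆ 𝓜_m = 𝓜_top with D_{𝓜_i} = D_i for all 0 ≤ i ≤ m; in particular 𝒟 is admissible. -/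

import Mathlib

open PowerSeries

noncomputable section

/-- `𝒪 = ℂ⟦z⟧`, the ring of formal power series over `ℂ`. -/
abbrev 𝒪 : Type := PowerSeries ℂ

/-- `ν(f)`: the order of a power series (least `n` with nonzero coefficient);
only meaningful for `f ≠ 0`. -/
noncomputable def ord (f : 𝒪) : ℕ := sInf {n : ℕ | PowerSeries.coeff n f ≠ 0}

/-- The value semigroup `Γ = {ν(x) : 0 ≠ x ∈ ℛ}` of a subalgebra `ℛ ⊆ 𝒪`. -/
def SGamma (R : Subalgebra ℂ 𝒪) : Set ℕ := {n | ∃ x ∈ R, x ≠ (0:𝒪) ∧ ord x = n}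

/-- The set of gaps `G = ℕ ∖ Γ`. -/
def Gaps (R : Subalgebra ℂ 𝒪) : Set ℕ := (SGamma R)ᶜ

/-- `Δ` is a `Γ`-module: `Γ + Δ ⊆ Δ`. -/
def IsGammaModule (Γ Δ : Set ℕ) : Prop := ∀ a ∈ Γ, ∀ d ∈ Δ, a + d ∈ Δ

/-- `Δ_𝓜 = {ν(x) : 0 ≠ x ∈ 𝓜}` for an `ℛ`-submodule `𝓜 ⊆ 𝒪`. -/
def DeltaM (R : Subalgebra ℂ 𝒪) (M : Submodule ↥R 𝒪) : Set ℕ :=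
  {n | ∃ x ∈ M, x ≠ (0:𝒪) ∧ ord x = n}

/-- `D_𝓜 = Δ_𝓜 ∩ G`, the set of added gaps. -/
def Dset (R : Subalgebra ℂ 𝒪) (M : Submodule ↥R 𝒪) : Set ℕ := DeltaM R M ∩ Gaps R

/-- A standard module: a finitely generated `ℛ`-submodule of `𝒪` containing an
element of order `0`. -/
def IsStd (R : Subalgebra ℂ 𝒪) (M : Submodule ↥R 𝒪) : Prop :=
  M.FG ∧ ∃ x ∈ M, x ≠ (0:𝒪) ∧ ord x = 0

/-- `c ≥ 1` is the conductor of `ℛ`: the minimal exponent with `z^c𝒪 ⊆ ℛ`. -/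
def HasConductor (R : Subalgebra ℂ 𝒪) (c : ℕ) : Prop :=
  1 ≤ c ∧ (∀ f : 𝒪, (PowerSeries.X : 𝒪)^c * f ∈ R) ∧
    ∀ c' : ℕ, (∀ f : 𝒪, (PowerSeries.X : 𝒪)^c' * f ∈ R) → c ≤ c'

/-- `z^j𝒪` as a `ℂ`-submodule of `𝒪`. -/
def zO (j : ℕ) : Submodule ℂ 𝒪 :=
  LinearMap.range (LinearMap.mulLeft ℂ ((PowerSeries.X : 𝒪)^j))

/-- `𝔪𝓜` as a `ℂ`-submodule of `𝒪`, where `𝔪 = {x ∈ ℛ : x = 0 or ν(x) > 0}`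
is the maximal ideal of `ℛ`. -/
def mSmul (R : Subalgebra ℂ 𝒪) (M : Submodule ↥R 𝒪) : Submodule ℂ 𝒪 :=
  Submodule.span ℂ {z : 𝒪 | ∃ r ∈ (R : Set 𝒪), ∃ y ∈ M, (r = 0 ∨ 0 < ord r) ∧ z = r * y}

/-- `dim_ℂ (A / B)` for `ℂ`-subspaces; intended for `B ≤ A`. -/
noncomputable def quotDim (A B : Submodule ℂ 𝒪) : ℕ :=
  Module.finrank ℂ (↥A ⧸ Submodule.comap A.subtype B)

/-- `D_i = D_0 ∪ {g_1, …, g_i}` (the gaps `g` are indexed by `1, …, m`). -/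
def DFlagSet (D0 : Set ℕ) (g : ℕ → ℕ) (i : ℕ) : Set ℕ := D0 ∪ g '' Set.Icc 1 i

/-- `(D_0, …, D_m)` with `D_i = D_0 ∪ {g_1 < … < g_i}` is a `D`-flag:
all `Δ_i = Γ ∪ D_i` are `Γ`-modules. -/
def IsDFlag (R : Subalgebra ℂ 𝒪) (m : ℕ) (D0 : Set ℕ) (g : ℕ → ℕ) : Prop :=
  D0 ⊆ Gaps R ∧ StrictMonoOn g (Set.Icc 1 m) ∧
  (∀ i, 1 ≤ i → i ≤ m → g i ∈ Gaps R \ D0) ∧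
  (∀ i ≤ m, IsGammaModule (SGamma R) (SGamma R ∪ DFlagSet D0 g i))

/-- A `D`-flag is admissible if it is realized by a flag of standard modules. -/
def IsAdmissibleFlag (R : Subalgebra ℂ 𝒪) (m : ℕ) (D0 : Set ℕ) (g : ℕ → ℕ) : Prop :=
  ∃ MM : ℕ → Submodule ↥R 𝒪, (∀ i, i < m → MM i ≤ MM (i+1)) ∧
    ∀ i ≤ m, IsStd R (MM i) ∧ Dset R (MM i) = DFlagSet D0 g i

/-- The subalgebra `ℂ[z^a, z^b + z^c] + z^N ℂ⟦z⟧` of `𝒪`. -/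
def Rring (a b c N : ℕ) : Subalgebra ℂ 𝒪 where
  carrier := {f : 𝒪 | ∃ p ∈ Algebra.adjoin ℂ
      ({(PowerSeries.X : 𝒪)^a, (PowerSeries.X : 𝒪)^b + (PowerSeries.X : 𝒪)^c} : Set 𝒪),
    ∃ g : 𝒪, f = p + (PowerSeries.X : 𝒪)^N * g}
  mul_mem' := by
    rintro x y ⟨p, hp, gx, rfl⟩ ⟨q, hq, gy, rfl⟩
    exact ⟨p * q, mul_mem hp hq,
      p * gy + gx * q + (PowerSeries.X : 𝒪)^N * (gx * gy), by ring⟩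
  one_mem' := ⟨1, one_mem _, 0, by ring⟩
  add_mem' := by
    rintro x y ⟨p, hp, gx, rfl⟩ ⟨q, hq, gy, rfl⟩
    exact ⟨p + q, add_mem hp hq, gx + gy, by ring⟩
  zero_mem' := ⟨0, zero_mem _, 0, by ring⟩
  algebraMap_mem' := fun r => ⟨algebraMap ℂ 𝒪 r, Subalgebra.algebraMap_mem _ r, 0, by ring⟩

/-- The ring `ℂ⟦z^4, z^{2u}+z^v⟧ = ℂ[z^4, z^{2u}+z^v] + z^{4u+v}ℂ⟦z⟧` for the
plane curve singularity with Puiseux exponents `(4, 2u, v)`. -/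
def Rcal (u v : ℕ) : Subalgebra ℂ 𝒪 := Rring 4 (2*u) v (4*u+v)

/-- The gap counting function `γ_Δ(ℓ) = |[ℓ,∞) ∖ Δ|`. -/
noncomputable def gapCount (Δ : Set ℕ) (ℓ : ℕ) : ℕ := Set.ncard {k : ℕ | ℓ ≤ k ∧ k ∉ Δ}

/-- `n = n(D)`: the smallest odd number in `(Δ ∪ {v}) ∩ [2u, ∞)`. -/
noncomputable def nOdd (u v : ℕ) (Δ : Set ℕ) : ℕ :=
  sInf {k : ℕ | Odd k ∧ 2*u ≤ k ∧ (k ∈ Δ ∨ k = v)}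

/-- The dimension change `μ_{D,g}` of Theorem `dimprop` (for the family `(4,2u,v)`),
where `Γ` is the value semigroup. -/
noncomputable def muDim (u v : ℕ) (Γ : Set ℕ) (D : Set ℕ) (gp : ℕ) : ℕ :=
  let Δ : Set ℕ := Γ ∪ D
  let Δ' : Set ℕ := Δ ∪ {gp}
  let n : ℕ := nOdd u v Δ
  if gp % 4 = 2 then
    (gapCount Δ' gp - gapCount Δ' (gp+4)) - (gapCount Δ' (gp+n) - gapCount Δ' (gp+4+n))
  else gapCount Δ' gp - gapCount Δ' (gp+4)


/-!
If `𝓜̄^{(n)} ≠ 𝓜̄^{(n+1)}`, then some functional on `𝓜_top / 𝔪𝓜_top` vanishes on the elements of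
order greater than `n` but on none of order `n`. As it kills `𝔪𝓜_top`, its kernel is again an
`ℛ`-module, and passing to the kernel removes exactly `n` from the set of orders: an element of
order `d < n` is moved into the kernel by subtracting a multiple of an element of order `n`, and
elements of order greater than `n` already lie there. So `𝓜_i` is the common kernel of the
functionals attached to the orders in `D_m ∖ D_i`.
-/

section OrderSet

variable {k : Type*} [Field k]

/-- The set of orders of the nonzero elements of a subspace of `k⟦X⟧`. The order of `0` is `⊤`, so
`0` contributes nothing. -/
def orderSet (V : Submodule k k⟦X⟧) : Set ℕ := {n | ∃ x ∈ V, x.order = n}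

/-- The functional `φ` tells the elements of order `n` in `V` apart from those of larger order, as
the coefficient of `X ^ n` does; nothing is asked on elements of order less than `n`. -/
structure DetectsOrder (φ : k⟦X⟧ →ₗ[k] k) (V : Submodule k k⟦X⟧) (n : ℕ) : Prop where
  map_eq_zero : ∀ x ∈ V, n < x.order → φ x = 0
  map_ne_zero : ∀ x ∈ V, x.order = n → φ x ≠ 0

theorem DetectsOrder.mono {φ : k⟦X⟧ →ₗ[k] k} {V W : Submodule k k⟦X⟧} {n : ℕ}
    (h : DetectsOrder φ V n) (hWV : W ≤ V) : DetectsOrder φ W n :=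
  ⟨fun x hx => h.map_eq_zero x (hWV hx), fun x hx => h.map_ne_zero x (hWV hx)⟩

theorem exists_lt_order_sub_smul {x w : k⟦X⟧} {n : ℕ} (hx : n ≤ x.order) (hw : w.order = n) :
    ∃ a : k, n < (x - a • w).order := by
  obtain ⟨hwn, hw_lt⟩ := order_eq_nat.mp hw
  refine ⟨coeff n x / coeff n w, lt_of_lt_of_le (Nat.cast_lt.mpr n.lt_succ_self) ?_⟩
  refine nat_le_order _ _ fun i hi => ?_
  rcases Nat.lt_succ_iff_lt_or_eq.mp hi with hin | rfl
  · simp [hw_lt i hin, coeff_of_lt_order i (lt_of_lt_of_le (Nat.cast_lt.mpr hin) hx)]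
  · simp [hwn]

theorem exists_detectsOrder {V U : Submodule k k⟦X⟧} {n : ℕ}
    (hU : ∀ x ∈ V, n < x.order → x ∈ U) (hV : ∃ x ∈ V, n ≤ x.order ∧ x ∉ U) :
    ∃ φ : k⟦X⟧ →ₗ[k] k, U ≤ φ.ker ∧ DetectsOrder φ V n := by
  obtain ⟨x, hxV, hxn, hxU⟩ := hV
  obtain ⟨φ, hφx, hφU⟩ := Submodule.exists_le_ker_of_notMem hxU
  refine ⟨φ, hφU, fun y hy hyn => hφU (hU y hy hyn), fun w hw hwn hφw => hφx ?_⟩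
  obtain ⟨a, ha⟩ := exists_lt_order_sub_smul hxn hwn
  have h_diff : φ (x - a • w) = 0 := hφU (hU _ (V.sub_mem hxV (V.smul_mem a hw)) ha)
  simpa [hφw] using h_diff

theorem orderSet_inf_ker {φ : k⟦X⟧ →ₗ[k] k} {V : Submodule k k⟦X⟧} {n : ℕ}
    (hφ : DetectsOrder φ V n) (hn : n ∈ orderSet V) :
    orderSet (V ⊓ φ.ker) = orderSet V \ {n} := by
  refine Set.Subset.antisymm ?_ ?_
  · rintro d ⟨x, ⟨hxV, hφx⟩, hxd⟩
    refine ⟨⟨x, hxV, hxd⟩, ?_⟩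
    rintro rfl
    exact hφ.map_ne_zero x hxV hxd hφx
  · rintro d ⟨⟨x, hxV, hxd⟩, hdn⟩
    rcases lt_or_gt_of_ne hdn with hlt | hgt
    · obtain ⟨e, heV, hen⟩ := hn
      have hφe : φ e ≠ 0 := hφ.map_ne_zero e heV hen
      refine ⟨x - (φ x / φ e) • e, ⟨V.sub_mem hxV (V.smul_mem _ heV), by simp [hφe]⟩, ?_⟩
      obtain ⟨hxd_ne, hxd_lt⟩ := order_eq_nat.mp hxd
      have he_lt : ∀ i < n, coeff i e = 0 := (order_eq_nat.mp hen).2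
      refine order_eq_nat.mpr ⟨by simpa [he_lt d hlt] using hxd_ne, fun i hi => ?_⟩
      simp [hxd_lt i hi, he_lt i (hi.trans hlt)]
    · exact ⟨x, ⟨hxV, hφ.map_eq_zero x hxV (by simpa [hxd] using hgt)⟩, hxd⟩

theorem orderSet_inf_iInf_ker {φ : ℕ → k⟦X⟧ →ₗ[k] k} {V : Submodule k k⟦X⟧} {T : Set ℕ}
    (hT : T.Finite) (hTV : T ⊆ orderSet V) (hφ : ∀ n ∈ T, DetectsOrder (φ n) V n) :
    orderSet (V ⊓ ⨅ n ∈ T, (φ n).ker) = orderSet V \ T := by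
  induction T, hT using Set.Finite.induction_on with
  | empty => simp
  | @insert n T hnT _ ih =>
    obtain ⟨hnV, hTV⟩ := Set.insert_subset_iff.mp hTV
    have ih := ih hTV fun j hj => hφ j (Set.mem_insert_of_mem n hj)
    have hn : n ∈ orderSet (V ⊓ ⨅ j ∈ T, (φ j).ker) := ih ▸ ⟨hnV, hnT⟩
    rw [iInf_insert, inf_comm (φ n).ker, ← inf_assoc,
      orderSet_inf_ker ((hφ n (Set.mem_insert n T)).mono inf_le_left) hn, ih, Set.sdiff_sdiff,
      Set.union_singleton]

end OrderSet

section Conductor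

variable {k : Type*} [Field k]

theorem cofg_of_X_pow_mul_mem {V : Submodule k k⟦X⟧} {n : ℕ} (hV : ∀ f, X ^ n * f ∈ V) :
    V.CoFG := by
  let jet : k⟦X⟧ →ₗ[k] Fin n → k := LinearMap.pi fun i => coeff i
  refine Submodule.CoFG.of_le (S := jet.ker) (fun f hf => ?_) (.ker jet)
  obtain ⟨g, rfl⟩ : X ^ n ∣ f := X_pow_dvd_iff.mpr fun i hi => congrFun hf ⟨i, hi⟩
  exact hV g

variable {R : Subalgebra k k⟦X⟧}

theorem fg_of_le_of_X_pow_mul_mem {N M : Submodule R k⟦X⟧} {n : ℕ} (hN : N.FG) (hNM : N ≤ M)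
    (hX : ∀ f, X ^ n * f ∈ N) : M.FG := by
  have : (N.restrictScalars k).CoFG := cofg_of_X_pow_mul_mem hX
  have : Module.Finite k (k⟦X⟧ ⧸ N) := .equiv (Submodule.Quotient.restrictScalarsEquiv k N)
  have : IsNoetherian R (k⟦X⟧ ⧸ N) := isNoetherian_of_tower k inferInstance
  refine Submodule.fg_of_fg_map_of_fg_inf_ker N.mkQ (IsNoetherian.noetherian _) ?_
  rwa [Submodule.ker_mkQ, inf_eq_right.mpr hNM]

theorem finite_of_X_pow_mul_mem {c : ℕ} (hR : ∀ f, X ^ c * f ∈ R) : Module.Finite R k⟦X⟧ :=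
  ⟨fg_of_le_of_X_pow_mul_mem (n := c) (Submodule.fg_span_singleton (1 : k⟦X⟧)) le_top fun f =>
    Submodule.mem_span_singleton.mpr ⟨⟨X ^ c * f, hR f⟩, by simp [Subalgebra.smul_def]⟩⟩

/-- A nonzero submodule `M` contains the finitely generated module `X ^ n k⟦X⟧` for some `n`, which
has finite codimension. -/
theorem isNoetherian_of_X_pow_mul_mem {c : ℕ} (hR : ∀ f, X ^ c * f ∈ R) :
    IsNoetherian R k⟦X⟧ := by
  refine ⟨fun M => ?_⟩
  rcases eq_or_ne M ⊥ with rfl | hM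
  · exact Submodule.fg_bot
  obtain ⟨x, hxM, hx⟩ := M.exists_mem_ne_zero_of_ne_bot hM
  obtain ⟨n, u, hu⟩ := IsDiscreteValuationRing.associated_pow_irreducible hx X_irreducible
  have := finite_of_X_pow_mul_mem hR
  let N : Submodule R k⟦X⟧ := (LinearMap.mulLeft R (X ^ (c + n) : k⟦X⟧)).range
  refine fg_of_le_of_X_pow_mul_mem (N := N) (Module.Finite.iff_fg.mp (Module.Finite.range _)) ?_
    fun f => ⟨f, rfl⟩
  rintro _ ⟨f, rfl⟩
  have h_factor : X ^ (c + n) * f = (⟨X ^ c * ((u : k⟦X⟧) * f), hR _⟩ : R) • x := by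
    rw [Subalgebra.smul_def, smul_eq_mul, pow_add, ← hu]
    ring
  simpa only [LinearMap.mulLeft_apply, h_factor] using M.smul_mem _ hxM

end Conductor

theorem ne_zero_and_ord_eq_iff {f : 𝒪} {n : ℕ} : f ≠ 0 ∧ ord f = n ↔ f.order = n := by
  have h_ord : ord f = f.order.toNat := by
    rcases eq_or_ne f 0 with rfl | hf
    · simp [ord]
    · exact le_antisymm (Nat.sInf_le (coeff_order hf))
        (le_csInf ⟨_, coeff_order hf⟩ fun n hn => ENat.toNat_le_of_le_natCast (order_le n hn))
  constructor
  · rintro ⟨hf, rfl⟩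
    rw [h_ord, coe_toNat_order hf]
  · intro hf
    exact ⟨by rintro rfl; simp at hf, by simp [h_ord, hf]⟩

theorem mem_zO_iff {f : 𝒪} {n : ℕ} : f ∈ zO n ↔ n ≤ f.order := by
  refine ⟨?_, fun hf => ?_⟩
  · rintro ⟨g, rfl⟩
    exact nat_le_order _ _ (X_pow_dvd_iff.mp (dvd_mul_right _ g))
  · obtain ⟨g, rfl⟩ : X ^ n ∣ f := X_pow_dvd_iff.mpr fun i hi =>
      coeff_of_lt_order i (lt_of_lt_of_le (Nat.cast_lt.mpr hi) hf)
    exact ⟨g, rfl⟩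

theorem not_le_of_quotDim_ne_zero {A B : Submodule ℂ 𝒪} (h : quotDim A B ≠ 0) : ¬ A ≤ B := by
  intro hAB
  rw [quotDim, Submodule.comap_subtype_eq_top.mpr hAB] at h
  exact h Module.finrank_zero_of_subsingleton

section StandardModules

variable {R : Subalgebra ℂ 𝒪} {M : Submodule R 𝒪}

theorem DeltaM_eq_orderSet : DeltaM R M = orderSet (M.restrictScalars ℂ) := by
  simp only [DeltaM, orderSet, ne_zero_and_ord_eq_iff, Submodule.restrictScalars_mem]

theorem mem_SGamma_iff {n : ℕ} : n ∈ SGamma R ↔ ∃ x ∈ R, x.order = n := by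
  simp only [SGamma, ne_zero_and_ord_eq_iff, Set.mem_ofPred_eq]

theorem zero_notMem_Gaps : 0 ∉ Gaps R :=
  not_not.mpr (mem_SGamma_iff.mpr ⟨1, R.one_mem, by simp⟩)

theorem finite_Gaps {c : ℕ} (hR : ∀ f : 𝒪, X ^ c * f ∈ R) : (Gaps R).Finite := by
  refine (Set.finite_Iio c).subset fun n hn => Set.mem_Iio.mpr (lt_of_not_ge fun hcn => hn ?_)
  refine mem_SGamma_iff.mpr ⟨X ^ n, ?_, order_X_pow n⟩
  exact pow_mul_pow_sub (X : 𝒪) hcn ▸ hR (X ^ (n - c))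

theorem isStd_iff_zero_mem_DeltaM {c : ℕ} (hR : ∀ f : 𝒪, X ^ c * f ∈ R) :
    IsStd R M ↔ 0 ∈ DeltaM R M :=
  have := isNoetherian_of_X_pow_mul_mem hR
  and_iff_right (IsNoetherian.noetherian M)

theorem mul_mem_mSmul {r y : 𝒪} (hr : r ∈ R) (hr₀ : constantCoeff r = 0) (hy : y ∈ M) :
    r * y ∈ mSmul R M := by
  refine Submodule.subset_span ⟨r, hr, y, hy, or_iff_not_imp_left.mpr fun hr_ne => ?_, rfl⟩
  refine Nat.pos_of_ne_zero fun h_ord => ?_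
  exact (order_eq_nat.mp (ne_zero_and_ord_eq_iff.mp ⟨hr_ne, h_ord⟩)).1 (by simpa using hr₀)

theorem mSmul_le : mSmul R M ≤ M.restrictScalars ℂ := by
  refine Submodule.span_le.mpr ?_
  rintro _ ⟨r, hr, y, hy, -, rfl⟩
  exact M.smul_mem ⟨r, hr⟩ hy

/-- A `ℂ`-subspace `V` with `𝔪𝓜 ⊆ V ⊆ 𝓜` as an `ℛ`-submodule: since `ℛ = ℂ ⊕ 𝔪`, such a subspace
is stable under `ℛ`. -/
def submoduleOfMSmulLE (V : Submodule ℂ 𝒪) (hV : mSmul R M ≤ V) (hVM : V ≤ M.restrictScalars ℂ) :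
    Submodule R 𝒪 where
  __ := V
  smul_mem' := by
    rintro ⟨r, hr⟩ x hx
    let a : ℂ := constantCoeff r
    have h_max : (r - algebraMap ℂ 𝒪 a) * x ∈ V :=
      hV (mul_mem_mSmul (R.sub_mem hr (R.algebraMap_mem a)) (by simp [a]) (hVM hx))
    have h_split : (⟨r, hr⟩ : R) • x = a • x + (r - algebraMap ℂ 𝒪 a) * x := by
      rw [Subalgebra.smul_def, Algebra.smul_def a x, smul_eq_mul]
      ring
    exact h_split ▸ V.add_mem (V.smul_mem a hx) h_max

theorem exists_detectsOrder_of_quotDim_ne_zero {n : ℕ}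
    (h : quotDim ((M.restrictScalars ℂ ⊓ zO n) ⊔ mSmul R M)
      ((M.restrictScalars ℂ ⊓ zO (n + 1)) ⊔ mSmul R M) ≠ 0) :
    ∃ φ : 𝒪 →ₗ[ℂ] ℂ, mSmul R M ≤ φ.ker ∧ DetectsOrder φ (M.restrictScalars ℂ) n := by
  set U := (M.restrictScalars ℂ ⊓ zO (n + 1)) ⊔ mSmul R M
  have hU : ∀ x ∈ M.restrictScalars ℂ, n < x.order → x ∈ U := fun x hx hxn =>
    Submodule.mem_sup_left ⟨hx, mem_zO_iff.mpr (by simpa using Order.add_one_le_of_lt hxn)⟩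
  have hV : ∃ x ∈ M.restrictScalars ℂ, n ≤ x.order ∧ x ∉ U := by
    by_contra! hV
    refine not_le_of_quotDim_ne_zero h (sup_le (fun x hx => ?_) le_sup_right)
    exact hV x hx.1 (mem_zO_iff.mp hx.2)
  obtain ⟨φ, hφU, hφ⟩ := exists_detectsOrder hU hV
  exact ⟨φ, le_sup_right.trans hφU, hφ⟩

theorem exists_antitone_isStd_Dset_eq_diff {c : ℕ} (hR : ∀ f : 𝒪, X ^ c * f ∈ R) (hM : IsStd R M)
    {S : Set ℕ} (hdim : ∀ n ∈ S, quotDim ((M.restrictScalars ℂ ⊓ zO n) ⊔ mSmul R M)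
      ((M.restrictScalars ℂ ⊓ zO (n + 1)) ⊔ mSmul R M) ≠ 0) :
    ∃ N : Set ℕ → Submodule R 𝒪, Antitone N ∧ N ∅ = M ∧
      ∀ T ⊆ S ∩ Dset R M, IsStd R (N T) ∧ Dset R (N T) = Dset R M \ T := by
  have hφ_exists : ∀ n, ∃ φ : 𝒪 →ₗ[ℂ] ℂ,
      mSmul R M ≤ φ.ker ∧ (n ∈ S → DetectsOrder φ (M.restrictScalars ℂ) n) := fun n => by
    by_cases hn : n ∈ S
    · obtain ⟨φ, hφ, hφn⟩ := exists_detectsOrder_of_quotDim_ne_zero (hdim n hn)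
      exact ⟨φ, hφ, fun _ => hφn⟩
    · exact ⟨0, by simp, fun h => absurd h hn⟩
  choose φ hφ_mSmul hφ using hφ_exists
  let N : Set ℕ → Submodule R 𝒪 := fun T =>
    submoduleOfMSmulLE (M.restrictScalars ℂ ⊓ ⨅ n ∈ T, (φ n).ker)
      (le_inf mSmul_le (le_iInf₂ fun n _ => hφ_mSmul n)) inf_le_left
  have hN_delta : ∀ T ⊆ S ∩ Dset R M, DeltaM R (N T) = DeltaM R M \ T := fun T hT => by
    have hT_fin : T.Finite := (finite_Gaps hR).subset fun n hn => (hT hn).2.2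
    rw [DeltaM_eq_orderSet (M := M), DeltaM_eq_orderSet]
    exact orderSet_inf_iInf_ker hT_fin (fun n hn => DeltaM_eq_orderSet ▸ (hT hn).2.1)
      fun n hn => hφ n (hT hn).1
  refine ⟨N, fun T T' hT => ?_, ?_, fun T hT => ⟨?_, ?_⟩⟩
  · exact inf_le_inf_left (M.restrictScalars ℂ) (biInf_mono fun _ hn => hT hn)
  · exact Submodule.restrictScalars_injective ℂ R 𝒪 (by simp [N, submoduleOfMSmulLE])
  · rw [isStd_iff_zero_mem_DeltaM hR, hN_delta T hT]
    exact ⟨hM.2, fun h => zero_notMem_Gaps (hT h).2.2⟩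
  · rw [Dset, Dset, hN_delta T hT, Set.sdiff_inter_right_comm]

end StandardModules

theorem DFlagSet_mono (D0 : Set ℕ) (g : ℕ → ℕ) : Monotone (DFlagSet D0 g) := fun _ _ hij =>
  Set.union_subset_union_right D0 (Set.image_mono (Set.Icc_subset_Icc_right hij))

theorem statement7_general {R : Subalgebra ℂ 𝒪} {c : ℕ} (hR : ∀ f : 𝒪, X ^ c * f ∈ R)
    {m : ℕ} {D0 : Set ℕ} {g : ℕ → ℕ} {Mtop : Submodule R 𝒪} (hstd : IsStd R Mtop)
    (hDm : Dset R Mtop = DFlagSet D0 g m)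
    (hdim : ∀ i, 1 ≤ i → i ≤ m →
      quotDim ((Mtop.restrictScalars ℂ ⊓ zO (g i)) ⊔ mSmul R Mtop)
        ((Mtop.restrictScalars ℂ ⊓ zO (g i + 1)) ⊔ mSmul R Mtop) = 1) :
    ∃ MM : ℕ → Submodule R 𝒪, (∀ i, i < m → MM i ≤ MM (i + 1)) ∧ MM m = Mtop ∧
      ∀ i ≤ m, IsStd R (MM i) ∧ Dset R (MM i) = DFlagSet D0 g i := by
  let D := DFlagSet D0 g
  have hdim_ne : ∀ n ∈ g '' Set.Icc 1 m, quotDim ((Mtop.restrictScalars ℂ ⊓ zO n) ⊔ mSmul R Mtop)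
      ((Mtop.restrictScalars ℂ ⊓ zO (n + 1)) ⊔ mSmul R Mtop) ≠ 0 := by
    rintro _ ⟨i, hi, rfl⟩
    simp [hdim i hi.1 hi.2]
  obtain ⟨N, hN_anti, hN_empty, hN⟩ := exists_antitone_isStd_Dset_eq_diff hR hstd hdim_ne
  have hD_diff : ∀ i, D m \ D i ⊆ (g '' Set.Icc 1 m) ∩ Dset R Mtop := fun i n hn =>
    ⟨hn.1.resolve_left fun hn0 => hn.2 (Or.inl hn0), hDm ▸ hn.1⟩
  refine ⟨fun i => N (D m \ D i), fun i _ => ?_, by simp [hN_empty], fun i hi => ?_⟩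
  · exact hN_anti (Set.sdiff_subset_sdiff_right (DFlagSet_mono D0 g i.le_succ))
  · obtain ⟨hi_std, hi_Dset⟩ := hN _ (hD_diff i)
    refine ⟨hi_std, hi_Dset.trans ?_⟩
    rw [hDm, Set.sdiff_sdiff_right_self, Set.inter_eq_right.mpr (DFlagSet_mono D0 g hi)]

/-- If `𝓜_top` is a standard module with `D_{𝓜_top} = D_m` and
`dim_ℂ(𝓜̄^{(g_i)}/𝓜̄^{(g_i+1)}) = 1` for all `1 ≤ i ≤ m`, then `𝓜_top` extends
to a flag of standard modules realizing the `D`-flag; in particular the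
`D`-flag is admissible. -/
theorem statement7 (R : Subalgebra ℂ 𝒪) (c : ℕ) (hR : HasConductor R c)
    (m : ℕ) (D0 : Set ℕ) (g : ℕ → ℕ) (hflag : IsDFlag R m D0 g)
    (Mtop : Submodule ↥R 𝒪) (hstd : IsStd R Mtop)
    (hDm : Dset R Mtop = DFlagSet D0 g m)
    (hdim : ∀ i, 1 ≤ i → i ≤ m →
      quotDim (((Mtop.restrictScalars ℂ) ⊓ zO (g i)) ⊔ mSmul R Mtop)
              (((Mtop.restrictScalars ℂ) ⊓ zO (g i + 1)) ⊔ mSmul R Mtop) = 1) :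
    (∃ MM : ℕ → Submodule ↥R 𝒪,
      (∀ i, i < m → MM i ≤ MM (i+1)) ∧ MM m = Mtop ∧
      ∀ i ≤ m, IsStd R (MM i) ∧ Dset R (MM i) = DFlagSet D0 g i) ∧
    IsAdmissibleFlag R m D0 g := by
  obtain ⟨MM, hle, htop, hMM⟩ := statement7_general hR.2.1 hstd hDm hdim
  exact ⟨⟨MM, hle, htop, hMM⟩, MM, hle, hMM⟩

end
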